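/- arXiv:2504.13823 — 4 statements merged into one kernel-verified Lean document; each statement's English description precedes it below -/
import Mathlib

section
/- Let γ be a stationary distribution of P (γ ≥ 0, Σ_s γ(s) = 1, and Σ_s γ(s)·P(s,s') = γ(s') for all s'). Define ν : S × ℕ → ℝ by ν(s,η) = γ(s)·ρ·(1-ρ)^η. Then ν is a stationary probability distribution of the belief Markov chain: ν ≥ 0, Σ_{(s,η)} ν(s,η) = 1, and for every q ∈ S × ℕ, ν(q) = Σ_{p ∈ S×ℕ} ν(p)·K(p,q). -/
open scoped BigOperators

/-- Transition kernel of the belief Markov chain of an intermittently observable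
Markov chain with transition matrix `P` and observation probability `ρ`:
`K((s,η),(s,η+1)) = 1-ρ`, `K((s,η),(j,0)) = ρ·(P^(η+1))(s,j)`, and `0` otherwise. -/
noncomputable def beliefK {S : Type*} [Fintype S] [DecidableEq S]
    (P : Matrix S S ℝ) (ρ : ℝ) : S × ℕ → S × ℕ → ℝ :=
  fun p q =>
    if q.2 = p.2 + 1 ∧ q.1 = p.1 then 1 - ρ
    else if q.2 = 0 then ρ * (P ^ (p.2 + 1)) p.1 q.1
    else 0

/-! In stationarity the age of the last observation is geometric and independent of the observed
state. A state of age `m + 1` is entered only from the same state of age `m`, which scales the mass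
by `1 - ρ`. A state `(j, 0)` is entered from every `(s, η)`; since `γ P ^ (η + 1) = γ`, the age `η`
contributes `γ j * ρ * (ρ * (1 - ρ) ^ η)`, and these form a geometric series with sum `γ j * ρ`.
Summing over states before ages is legitimate because all terms are nonnegative. -/

open scoped Matrix

lemma hasSum_prod_of_nonneg {α β : Type*} {f : α × β → ℝ} {g : α → ℝ} {c : ℝ} (hf : 0 ≤ f)
    (hfg : ∀ a, HasSum (fun b => f (a, b)) (g a)) (hg : HasSum g c) : HasSum f c := by
  have hf_summable : Summable f := by
    refine (summable_prod_of_nonneg hf).mpr ⟨fun a => (hfg a).summable, ?_⟩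
    simpa only [(hfg _).tsum_eq] using hg.summable
  have hc : ∑' p, f p = c := (hf_summable.hasSum.prod_fiberwise hfg).unique hg
  exact hc ▸ hf_summable.hasSum

lemma hasSum_mul_geometric {ρ : ℝ} (hρ0 : 0 < ρ) (hρ1 : ρ ≤ 1) (a : ℝ) :
    HasSum (fun n : ℕ => a * ρ * (1 - ρ) ^ n) a := by
  have hgeom : HasSum (fun n : ℕ => (1 - ρ) ^ n) ρ⁻¹ := by
    simpa only [sub_sub_cancel] using
      hasSum_geometric_of_lt_one (sub_nonneg.mpr hρ1) (sub_lt_self 1 hρ0)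
  simpa only [mul_inv_cancel_right₀ hρ0.ne'] using hgeom.mul_left (a * ρ)

lemma vecMul_pow_eq_self {n R : Type*} [Fintype n] [DecidableEq n] [Semiring R]
    {A : Matrix n n R} {v : n → R} (hv : v ᵥ* A = v) (k : ℕ) : v ᵥ* A ^ k = v := by
  induction k with
  | zero => rw [pow_zero, Matrix.vecMul_one]
  | succ k ih => rw [pow_succ, ← Matrix.vecMul_vecMul, ih, hv]

section BeliefDist

/-- The candidate stationary distribution of the belief chain: the product of `γ` on the last
observed state with the geometric distribution of parameter `ρ` on its age. It is defined for
arbitrary real `γ` and `ρ`, so that nonnegativity and total mass are separate statements. -/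
def beliefDist {S : Type*} (γ : S → ℝ) (ρ : ℝ) : S × ℕ → ℝ :=
  fun p => γ p.1 * ρ * (1 - ρ) ^ p.2

variable {S : Type*} {γ : S → ℝ} {ρ : ℝ}

lemma beliefDist_nonneg (hρ0 : 0 ≤ ρ) (hρ1 : ρ ≤ 1) (hγ : ∀ s, 0 ≤ γ s) (p : S × ℕ) :
    0 ≤ beliefDist γ ρ p :=
  mul_nonneg (mul_nonneg (hγ p.1) hρ0) (pow_nonneg (sub_nonneg.mpr hρ1) p.2)

lemma hasSum_beliefDist (hρ0 : 0 < ρ) (hρ1 : ρ ≤ 1) (hγ : ∀ s, 0 ≤ γ s) {c : ℝ}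
    (hγc : HasSum γ c) : HasSum (beliefDist γ ρ) c :=
  hasSum_prod_of_nonneg (beliefDist_nonneg hρ0.le hρ1 hγ)
    (fun s => hasSum_mul_geometric hρ0 hρ1 (γ s)) hγc

lemma beliefDist_succ (s : S) (m : ℕ) :
    beliefDist γ ρ (s, m + 1) = beliefDist γ ρ (s, m) * (1 - ρ) := by
  simp only [beliefDist, pow_succ, mul_assoc]

end BeliefDist

section BeliefKernel

variable {S : Type*} [Fintype S] [DecidableEq S] {P : Matrix S S ℝ} {γ : S → ℝ} {ρ : ℝ}

lemma beliefK_zero (p : S × ℕ) (j : S) :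
    beliefK P ρ p (j, 0) = ρ * (P ^ (p.2 + 1)) p.1 j := by
  simp [beliefK]

lemma beliefK_succ (p : S × ℕ) (j : S) (m : ℕ) :
    beliefK P ρ p (j, m + 1) = if p = (j, m) then 1 - ρ else 0 := by
  simp [beliefK, Prod.ext_iff, and_comm, eq_comm]

lemma hasSum_mul_beliefK_succ (f : S × ℕ → ℝ) (j : S) (m : ℕ) :
    HasSum (fun p => f p * beliefK P ρ p (j, m + 1)) (f (j, m) * (1 - ρ)) := by
  convert hasSum_single (j, m) fun p hp => ?_ using 1
  · rw [beliefK_succ, if_pos rfl]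
  · rw [beliefK_succ, if_neg hp, mul_zero]

lemma sum_beliefDist_mul_beliefK_zero (hγP : γ ᵥ* P = γ) (j : S) (n : ℕ) :
    ∑ s, beliefDist γ ρ (s, n) * beliefK P ρ (s, n) (j, 0) = γ j * ρ * ρ * (1 - ρ) ^ n := by
  have hγPn : ∑ s, γ s * (P ^ (n + 1)) s j = γ j := congrFun (vecMul_pow_eq_self hγP (n + 1)) j
  calc ∑ s, beliefDist γ ρ (s, n) * beliefK P ρ (s, n) (j, 0)
      = ∑ s, γ s * (P ^ (n + 1)) s j * (ρ * ρ * (1 - ρ) ^ n) :=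
        Finset.sum_congr rfl fun s _ => by rw [beliefK_zero, beliefDist]; ring
    _ = γ j * ρ * ρ * (1 - ρ) ^ n := by rw [← Finset.sum_mul, hγPn]; ring

lemma hasSum_beliefDist_mul_beliefK_zero (hρ0 : 0 < ρ) (hρ1 : ρ ≤ 1) (hP : ∀ s s', 0 ≤ P s s')
    (hγ : ∀ s, 0 ≤ γ s) (hγP : γ ᵥ* P = γ) (j : S) :
    HasSum (fun p => beliefDist γ ρ p * beliefK P ρ p (j, 0)) (γ j * ρ) := by
  have hnonneg (p : S × ℕ) : 0 ≤ beliefDist γ ρ p * beliefK P ρ p (j, 0) := by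
    rw [beliefK_zero]
    exact mul_nonneg (beliefDist_nonneg hρ0.le hρ1 hγ p)
      (mul_nonneg hρ0.le (Matrix.pow_apply_nonneg hP _ _ _))
  have hfiber (n : ℕ) : HasSum (fun s => beliefDist γ ρ (s, n) * beliefK P ρ (s, n) (j, 0))
      (γ j * ρ * ρ * (1 - ρ) ^ n) :=
    sum_beliefDist_mul_beliefK_zero hγP j n ▸ hasSum_fintype _
  exact (Equiv.prodComm ℕ S).hasSum_iff.mp <|
    hasSum_prod_of_nonneg (fun p => hnonneg p.swap) hfiber (hasSum_mul_geometric hρ0 hρ1 (γ j * ρ))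

lemma hasSum_beliefDist_mul_beliefK (hρ0 : 0 < ρ) (hρ1 : ρ ≤ 1) (hP : ∀ s s', 0 ≤ P s s')
    (hγ : ∀ s, 0 ≤ γ s) (hγP : γ ᵥ* P = γ) :
    ∀ q, HasSum (fun p => beliefDist γ ρ p * beliefK P ρ p q) (beliefDist γ ρ q)
  | (j, 0) => by
    simpa only [beliefDist, pow_zero, mul_one] using
      hasSum_beliefDist_mul_beliefK_zero hρ0 hρ1 hP hγ hγP j
  | (j, m + 1) => beliefDist_succ (γ := γ) j m ▸ hasSum_mul_beliefK_succ (beliefDist γ ρ) j m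

end BeliefKernel

theorem stmt0_general {S : Type*} [Fintype S] [DecidableEq S] {P : Matrix S S ℝ} {ρ : ℝ}
    (hρ0 : 0 < ρ) (hρ1 : ρ ≤ 1) (hP : ∀ s s', 0 ≤ P s s')
    {γ : S → ℝ} (hγ : ∀ s, 0 ≤ γ s) (hγP : γ ᵥ* P = γ) :
    (∀ p, 0 ≤ beliefDist γ ρ p) ∧ HasSum (beliefDist γ ρ) (∑ s, γ s) ∧
      ∀ q, HasSum (fun p => beliefDist γ ρ p * beliefK P ρ p q) (beliefDist γ ρ q) :=
  ⟨beliefDist_nonneg hρ0.le hρ1 hγ, hasSum_beliefDist hρ0 hρ1 hγ (hasSum_fintype γ),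
    hasSum_beliefDist_mul_beliefK hρ0 hρ1 hP hγ hγP⟩

theorem stmt0 {S : Type*} [Fintype S] [DecidableEq S] [Nonempty S]
    (P : Matrix S S ℝ) (ρ : ℝ) (hρ0 : 0 < ρ) (hρ1 : ρ ≤ 1)
    (hPnn : ∀ s s', 0 ≤ P s s') (hProw : ∀ s, ∑ s', P s s' = 1)
    (γ : S → ℝ) (hγnn : ∀ s, 0 ≤ γ s) (hγsum : ∑ s, γ s = 1)
    (hγstat : ∀ s', ∑ s, γ s * P s s' = γ s')
    (ν : S × ℕ → ℝ) (hν : ∀ s η, ν (s, η) = γ s * ρ * (1 - ρ) ^ η) :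
    (∀ p, 0 ≤ ν p) ∧ (∑' p : S × ℕ, ν p = 1) ∧
      (∀ q : S × ℕ, ν q = ∑' p : S × ℕ, ν p * beliefK P ρ p q) := by
  obtain rfl : ν = beliefDist γ ρ := funext fun p => hν p.1 p.2
  obtain ⟨hnonneg, hmass, hinv⟩ := stmt0_general hρ0 hρ1 hPnn hγnn (funext hγstat)
  exact ⟨hnonneg, hmass.tsum_eq.trans hγsum, fun q => (hinv q).tsum_eq.symm⟩
end

section
/- Let x : S × ℕ → ℝ be nonnegative, summable, and stationary for the belief kernel K, i.e., x(q) = Σ_{p ∈ S×ℕ} x(p)·K(p,q) for every q ∈ S × ℕ. Then x(s,η) = (1-ρ)^η · x(s,0) for all s ∈ S and η ∈ ℕ. -/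
open scoped BigOperators

section

variable {S : Type*} [Fintype S] [DecidableEq S] (P : Matrix S S ℝ) (ρ : ℝ)

theorem beliefK_self_succ (s : S) (η : ℕ) : beliefK P ρ (s, η) (s, η + 1) = 1 - ρ := by
  simp [beliefK]

theorem beliefK_succ_of_ne {p : S × ℕ} {s : S} {η : ℕ} (hp : p ≠ (s, η)) :
    beliefK P ρ p (s, η + 1) = 0 := by
  have not_aging : ¬(η + 1 = p.2 + 1 ∧ s = p.1) := fun ⟨hη, hs⟩ ↦
    hp (Prod.ext hs.symm (Nat.succ_injective hη).symm)
  exact (if_neg not_aging).trans (if_neg (Nat.succ_ne_zero η))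

theorem tsum_mul_beliefK_succ (x : S × ℕ → ℝ) (s : S) (η : ℕ) :
    ∑' p, x p * beliefK P ρ p (s, η + 1) = x (s, η) * (1 - ρ) := by
  rw [tsum_eq_single (s, η) fun p hp ↦ by rw [beliefK_succ_of_ne P ρ hp, mul_zero],
    beliefK_self_succ]

theorem stmt1_general (x : S × ℕ → ℝ)
    (hx : ∀ s η, x (s, η + 1) = ∑' p, x p * beliefK P ρ p (s, η + 1)) (s : S) (η : ℕ) :
    x (s, η) = (1 - ρ) ^ η * x (s, 0) := by
  induction η with
  | zero => rw [pow_zero, one_mul]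
  | succ η ih =>
    calc
      x (s, η + 1) = x (s, η) * (1 - ρ) := by rw [hx, tsum_mul_beliefK_succ]
      _ = (1 - ρ) ^ (η + 1) * x (s, 0) := by rw [ih]; ring

end

theorem stmt1 {S : Type*} [Fintype S] [DecidableEq S] [Nonempty S]
    (P : Matrix S S ℝ) (ρ : ℝ) (hρ0 : 0 < ρ) (hρ1 : ρ ≤ 1)
    (hPnn : ∀ s s', 0 ≤ P s s') (hProw : ∀ s, ∑ s', P s s' = 1)
    (x : S × ℕ → ℝ) (hxnn : ∀ p, 0 ≤ x p) (hxsum : Summable x)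
    (hxstat : ∀ q : S × ℕ, x q = ∑' p : S × ℕ, x p * beliefK P ρ p q) :
    ∀ (s : S) (η : ℕ), x (s, η) = (1 - ρ) ^ η * x (s, 0) :=
  stmt1_general P ρ x fun s η ↦ hxstat (s, η + 1)
end

section
/- Let x : S × ℕ → ℝ be nonnegative and stationary for the belief kernel K (i.e., x(q) = Σ_{p} x(p)·K(p,q) for all q), summable with total mass Σ_{(s,η)} x(s,η) = 1. Then Σ_s x(s,0) = ρ, and the restriction x(·,0) is a left fixed vector of the resolvent matrix M: for every s' ∈ S, Σ_s x(s,0)·M(s,s') = x(s',0). -/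
open scoped BigOperators

/-- The resolvent matrix `M(s,s') = ρ·Σ_{η=0}^∞ (1-ρ)^η·(P^(η+1))(s,s')`. -/
noncomputable def resolventM {S : Type*} [Fintype S] [DecidableEq S]
    (P : Matrix S S ℝ) (ρ : ℝ) : S → S → ℝ :=
  fun s s' => ρ * ∑' η : ℕ, (1 - ρ) ^ η * (P ^ (η + 1)) s s'

/-!
Stationarity at a state of positive age reads `x (s, η + 1) = (1 - ρ) * x (s, η)`. Hence `x (s, ·)`
is geometric, and summing the recursion over `η` gives `x (s, 0) = ρ * ∑ η, x (s, η)`. Substituting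
the geometric profile into the stationarity equation at age zero yields the resolvent `M`.
-/

/-- `x` is a stationary weight for the kernel `K` on `α`: a left fixed vector `x K = x`. The sums
are required to converge, so that the equation never holds through the value `0` of a divergent
`tsum`; `x` may take negative values. -/
def IsStationaryWeight {α : Type*} (K : α → α → ℝ) (x : α → ℝ) : Prop :=
  ∀ q, HasSum (fun p => x p * K p q) (x q)

theorem isStationaryWeight_of_eq_tsum {α : Type*} {K : α → α → ℝ} {x : α → ℝ} {C : ℝ}
    (hx : Summable x) (hK : ∀ p q, |K p q| ≤ C) (hstat : ∀ q, x q = ∑' p, x p * K p q) :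
    IsStationaryWeight K x := by
  intro q
  have hsum : Summable fun p => x p * K p q :=
    .of_norm_bounded (hx.abs.mul_right C) fun p => by
      rw [Real.norm_eq_abs, abs_mul]
      gcongr
      exact hK p q
  exact hstat q ▸ hsum.hasSum

section BeliefChain

variable {S : Type*} [Fintype S] [DecidableEq S] {P : Matrix S S ℝ} {ρ : ℝ} {x : S × ℕ → ℝ}

theorem beliefK_zero_right (P : Matrix S S ℝ) (ρ : ℝ) (p : S × ℕ) (s' : S) :
    beliefK P ρ p (s', 0) = ρ * (P ^ (p.2 + 1)) p.1 s' := by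
  simp [beliefK]

theorem beliefK_succ_right (P : Matrix S S ℝ) (ρ : ℝ) (p : S × ℕ) (s : S) (η : ℕ) :
    beliefK P ρ p (s, η + 1) = if p = (s, η) then 1 - ρ else 0 := by
  simp [beliefK, Prod.ext_iff, and_comm, eq_comm (a := p.1), eq_comm (a := p.2)]

theorem abs_beliefK_le_one (hρ0 : 0 ≤ ρ) (hρ1 : ρ ≤ 1) (hP : P ∈ Matrix.rowStochastic ℝ S)
    (p q : S × ℕ) : |beliefK P ρ p q| ≤ 1 := by
  obtain ⟨s', _ | η⟩ := q
  · have hpow : P ^ (p.2 + 1) ∈ Matrix.rowStochastic ℝ S := pow_mem hP _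
    have hnonneg := Matrix.nonneg_of_mem_rowStochastic hpow (i := p.1) (j := s')
    have hle := Matrix.le_one_of_mem_rowStochastic hpow (i := p.1) (j := s')
    rw [beliefK_zero_right, abs_of_nonneg (mul_nonneg hρ0 hnonneg)]
    exact mul_le_one₀ hρ1 hnonneg hle
  · rw [beliefK_succ_right, abs_le]
    split_ifs <;> constructor <;> linarith

namespace IsStationaryWeight

theorem apply_succ (hx : IsStationaryWeight (beliefK P ρ) x) (s : S) (η : ℕ) :
    x (s, η + 1) = (1 - ρ) * x (s, η) := by
  rw [← (hx (s, η + 1)).tsum_eq]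
  simp [beliefK_succ_right, mul_comm]

theorem apply_eq_pow_mul (hx : IsStationaryWeight (beliefK P ρ) x) (s : S) (η : ℕ) :
    x (s, η) = (1 - ρ) ^ η * x (s, 0) := by
  induction η with
  | zero => simp
  | succ η ih => rw [hx.apply_succ, ih, pow_succ', mul_assoc]

theorem apply_zero_eq_mul_tsum (hx : IsStationaryWeight (beliefK P ρ) x) {s : S}
    (hs : Summable fun η => x (s, η)) : x (s, 0) = ρ * ∑' η, x (s, η) := by
  have hsplit : ∑' η, x (s, η) = x (s, 0) + (1 - ρ) * ∑' η, x (s, η) := by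
    conv_lhs => rw [hs.tsum_eq_zero_add]
    simp only [hx.apply_succ, tsum_mul_left]
  linarith

theorem sum_apply_zero (hx : IsStationaryWeight (beliefK P ρ) x) {m : ℝ} (hm : HasSum x m) :
    ∑ s, x (s, 0) = ρ * m := by
  calc ∑ s, x (s, 0) = ∑ s, ρ * ∑' η, x (s, η) :=
        Finset.sum_congr rfl fun s _ => hx.apply_zero_eq_mul_tsum (hm.summable.prod_factor s)
    _ = ρ * m := by
        rw [← Finset.mul_sum, ← hm.tsum_eq, hm.summable.tsum_prod, tsum_fintype]

theorem sum_apply_zero_mul_resolventM (hx : IsStationaryWeight (beliefK P ρ) x) (s' : S) :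
    ∑ s, x (s, 0) * resolventM P ρ s s' = x (s', 0) := by
  have hgeom (s : S) (η : ℕ) : x (s, η) * beliefK P ρ (s, η) (s', 0) =
      x (s, 0) * (ρ * ((1 - ρ) ^ η * (P ^ (η + 1)) s s')) := by
    rw [beliefK_zero_right, hx.apply_eq_pow_mul s η]
    ring
  have hobs := hx (s', 0)
  symm
  calc x (s', 0) = ∑ s, ∑' η, x (s, η) * beliefK P ρ (s, η) (s', 0) := by
        rw [← hobs.tsum_eq, hobs.summable.tsum_prod, tsum_fintype]
    _ = ∑ s, x (s, 0) * resolventM P ρ s s' := by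
        simp only [hgeom, tsum_mul_left, resolventM]

end IsStationaryWeight

end BeliefChain

theorem stmt2_general {S : Type*} [Fintype S] [DecidableEq S] {P : Matrix S S ℝ} {ρ : ℝ}
    {x : S × ℕ → ℝ} {m : ℝ} (hm : HasSum x m) (hx : IsStationaryWeight (beliefK P ρ) x) :
    (∑ s, x (s, 0) = ρ * m) ∧
      (∀ s' : S, ∑ s, x (s, 0) * resolventM P ρ s s' = x (s', 0)) :=
  ⟨hx.sum_apply_zero hm, hx.sum_apply_zero_mul_resolventM⟩

theorem stmt2 {S : Type*} [Fintype S] [DecidableEq S] [Nonempty S]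
    (P : Matrix S S ℝ) (ρ : ℝ) (hρ0 : 0 < ρ) (hρ1 : ρ ≤ 1)
    (hPnn : ∀ s s', 0 ≤ P s s') (hProw : ∀ s, ∑ s', P s s' = 1)
    (x : S × ℕ → ℝ) (hxnn : ∀ p, 0 ≤ x p) (hxsum : Summable x)
    (hx1 : ∑' p : S × ℕ, x p = 1)
    (hxstat : ∀ q : S × ℕ, x q = ∑' p : S × ℕ, x p * beliefK P ρ p q) :
    (∑ s, x (s, 0) = ρ) ∧
      (∀ s' : S, ∑ s, x (s, 0) * resolventM P ρ s s' = x (s', 0)) := by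
  have hP : P ∈ Matrix.rowStochastic ℝ S := Matrix.mem_rowStochastic_iff_sum.2 ⟨hPnn, hProw⟩
  have hm : HasSum x 1 := hx1 ▸ hxsum.hasSum
  simpa only [mul_one] using stmt2_general hm
    (isStationaryWeight_of_eq_tsum hxsum (abs_beliefK_le_one hρ0.le hρ1 hP) hxstat)
end

section
/- Assume P is irreducible (for all s,s' ∈ S there exists n ≥ 1 with (P^n)(s,s') > 0). Then every nonempty set C ⊆ S × ℕ that is closed for the belief kernel K contains all age-zero states: (j,0) ∈ C for every j ∈ S. -/
open scoped BigOperators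

/-!
Each observation moves a closed set `C` from `(s, η)` to every `(j, 0)` with
`0 < (P ^ (η + 1)) s j`. Every row of an irreducible `P` has a positive entry, and this passes to
the powers of `P`, so a nonempty `C` contains some age-zero state `(i, 0)`. At age zero the
observations follow the edges of the graph of positive entries of `P`, and this graph has a path
from `i` to every `j`.
-/

open Quiver

section Quiver

variable {V : Type*} [Quiver V]

lemma exists_nonempty_hom_of_isSStronglyConnected (hV : IsSStronglyConnected V) (a : V) :
    ∃ b, Nonempty (a ⟶ b) := by
  obtain ⟨p, hp⟩ := hV a a
  obtain ⟨b, e, -, -, -⟩ := p.length_ne_zero_iff_eq_comp.mp hp.ne'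
  exact ⟨b, ⟨e⟩⟩

lemma exists_path_length_eq (hV : ∀ a : V, ∃ b, Nonempty (a ⟶ b)) (a : V) (m : ℕ) :
    ∃ (b : V) (p : Path a b), p.length = m := by
  induction m with
  | zero => exact ⟨a, .nil, rfl⟩
  | succ m ih =>
    obtain ⟨b, p, hp⟩ := ih
    obtain ⟨c, ⟨e⟩⟩ := hV b
    exact ⟨c, p.cons e, congrArg (· + 1) hp⟩

end Quiver

section PositiveEntries

variable {n R : Type*} [Ring R] [LinearOrder R] {A : Matrix n n R}

lemma exists_apply_pos_of_isIrreducible (hA : A.IsIrreducible) (i : n) : ∃ j, 0 < A i j := by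
  let := A.toQuiver
  obtain ⟨j, ⟨e⟩⟩ := exists_nonempty_hom_of_isSStronglyConnected hA.connected i
  exact ⟨j, e.down⟩

lemma exists_pow_apply_pos [Fintype n] [DecidableEq n] [IsStrictOrderedRing R]
    (hA : ∀ i j, 0 ≤ A i j) (hrow : ∀ i, ∃ j, 0 < A i j) (m : ℕ) (i : n) :
    ∃ j, 0 < (A ^ m) i j := by
  let := A.toQuiver
  have hout (i : n) : ∃ j, Nonempty (i ⟶ j) := (hrow i).imp fun _ h => ⟨⟨h⟩⟩
  obtain ⟨j, p, hp⟩ := exists_path_length_eq hout i m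
  exact ⟨j, (Matrix.pow_apply_pos_iff_nonempty_path hA m i j).mpr ⟨p, hp⟩⟩

end PositiveEntries

/-- Closedness of a set of states `C` for a transition kernel `K`: no transition of positive
weight leaves `C`. -/
def IsClosedFor {α R : Type*} [Zero R] [LT R] (K : α → α → R) (C : Set α) : Prop :=
  ∀ p ∈ C, ∀ q, 0 < K p q → q ∈ C

section Belief

variable {S : Type*} [Fintype S] [DecidableEq S] {P : Matrix S S ℝ} {ρ : ℝ} {C : Set (S × ℕ)}

lemma beliefK_apply_zero (P : Matrix S S ℝ) (ρ : ℝ) (p : S × ℕ) (j : S) :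
    beliefK P ρ p (j, 0) = ρ * (P ^ (p.2 + 1)) p.1 j := by
  simp [beliefK]

lemma IsClosedFor.mk_zero_mem_of_pow_pos (hC : IsClosedFor (beliefK P ρ) C) (hρ : 0 < ρ)
    {p : S × ℕ} (hp : p ∈ C) {j : S} (hj : 0 < (P ^ (p.2 + 1)) p.1 j) : (j, 0) ∈ C :=
  hC p hp (j, 0) (beliefK_apply_zero P ρ p j ▸ mul_pos hρ hj)

lemma IsClosedFor.exists_mk_zero_mem (hC : IsClosedFor (beliefK P ρ) C) (hρ : 0 < ρ)
    (hP : ∀ i j, 0 ≤ P i j) (hrow : ∀ i, ∃ j, 0 < P i j) (hne : C.Nonempty) :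
    ∃ i, (i, 0) ∈ C := by
  obtain ⟨p, hp⟩ := hne
  obtain ⟨i, hi⟩ := exists_pow_apply_pos hP hrow (p.2 + 1) p.1
  exact ⟨i, hC.mk_zero_mem_of_pow_pos hρ hp hi⟩

lemma IsClosedFor.mk_zero_mem_of_path (hC : IsClosedFor (beliefK P ρ) C) (hρ : 0 < ρ) {i j : S}
    (hi : (i, 0) ∈ C) (w : @Path S P.toQuiver i j) : (j, 0) ∈ C := by
  let := P.toQuiver
  induction w with
  | nil => exact hi
  | @cons k j _ e ih =>
    have hkj : 0 < (P ^ (0 + 1)) k j := by simpa only [zero_add, pow_one] using e.down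
    exact hC.mk_zero_mem_of_pow_pos hρ ih hkj

end Belief

theorem stmt6_general {S : Type*} [Fintype S] [DecidableEq S] {P : Matrix S S ℝ} {ρ : ℝ}
    (hρ : 0 < ρ) (hP : P.IsIrreducible) {C : Set (S × ℕ)} (hne : C.Nonempty)
    (hC : IsClosedFor (beliefK P ρ) C) (j : S) : (j, 0) ∈ C := by
  obtain ⟨i, hi⟩ :=
    hC.exists_mk_zero_mem hρ hP.nonneg (exists_apply_pos_of_isIrreducible hP) hne
  obtain ⟨w, -⟩ := hP.connected i j
  exact hC.mk_zero_mem_of_path hρ hi w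

/-- If `P` is irreducible, then every nonempty set `C ⊆ S × ℕ` that is closed
for the belief kernel `K` contains all age-zero states. -/
theorem stmt6 {S : Type*} [Fintype S] [DecidableEq S] [Nonempty S]
    (P : Matrix S S ℝ) (ρ : ℝ) (hρ0 : 0 < ρ) (hρ1 : ρ ≤ 1)
    (hPnn : ∀ s s', 0 ≤ P s s') (hProw : ∀ s, ∑ s', P s s' = 1)
    (hirr : ∀ s s' : S, ∃ n : ℕ, 1 ≤ n ∧ 0 < (P ^ n) s s')
    (C : Set (S × ℕ)) (hCne : C.Nonempty)
    (hCclosed : ∀ p ∈ C, ∀ q : S × ℕ, 0 < beliefK P ρ p q → q ∈ C) :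
    ∀ j : S, (j, 0) ∈ C :=
  stmt6_general hρ0 ((Matrix.isIrreducible_iff_exists_pow_pos hPnn).mpr hirr) hCne hCclosed
end
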